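/- arXiv:2212.02305 — 2 statements merged into one kernel-verified Lean document; each statement's English description precedes it below -/
import Mathlib

section
/- Let B = UUᵀ ∈ ℝ^{n×n} and R ∈ ℝ^{m×m} be the diffusion-modelled circulant covariance matrices B = (σ_b²ν_b L_b/h_b)(I_n − L_b²Δ_{h_b})^{−M_b} and R = (σ_o²ν_o L_o/h_o)(I_m − L_o²Δ_{h_o})^{−M_o}, and let H be the uniform selection operator with n = ζm, h_o = ζh_b. If S = I_n + Uᵀ Hᵀ R^{−1} H U, then λ_i(S) = 1 + α Σ_{r=0}^{ζ−1} [1 + 4L̃_o² sin²(πi/m)]^{M_o} / [1 + 4L̃_b² sin²(π(i+rm)/(ζm))]^{M_b} for i in {0,...,m−1}, and λ_i(S) = 1 otherwise, where α = σ_b²ν_b L_b/(σ_o²ν_o L_o), L̃_o = L_o/h_o, L̃_b = L_b/h_b. -/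
open Matrix Polynomial

/-- The (unnormalised-frequency) `i`-th Fourier eigenvector of size-`m` circulant
matrices: `f^(i)_p = (1/√m) exp(-2πI i p / m)`. -/
noncomputable def fourierVec (m : ℕ) [NeZero m] (i : ZMod m) : ZMod m → ℂ :=
  fun p => (1 / (Real.sqrt m : ℂ)) *
    Complex.exp (-(2 * Real.pi * Complex.I * (i.val : ℂ) * (p.val : ℂ)) / m)

/-- The `i`-th Fourier eigenvalue of a (circulant) matrix `A`, i.e. the `i`-th DFT
coefficient of its first column: `λ_i(A) = Σ_k A k 0 · exp(2πI i k / m)`. -/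
noncomputable def fourierEig {m : ℕ} [NeZero m] (A : Matrix (ZMod m) (ZMod m) ℂ)
    (i : ZMod m) : ℂ :=
  ∑ k : ZMod m, A k 0 * Complex.exp (2 * Real.pi * Complex.I * (i.val : ℂ) * (k.val : ℂ) / m)

/-- A matrix indexed by `ZMod m` is circulant iff it is invariant under simultaneous
cyclic shifts of rows and columns. -/
def IsCirculant {m : ℕ} {α : Type*} (A : Matrix (ZMod m) (ZMod m) α) : Prop :=
  ∀ i j d : ZMod m, A (i + d) (j + d) = A i j

/-- The uniform selection operator `H : ℝ^{m×n}` picking every `ζ`-th component: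
`(Hx)_p = x_{ζ p}`. -/
noncomputable def selectionOp (ζ m n : ℕ) [NeZero m] [NeZero n] :
    Matrix (ZMod m) (ZMod n) ℝ :=
  Matrix.of fun p q => if q.val = ζ * p.val then 1 else 0

/-- The periodic second-difference (Laplacian) matrix with grid spacing `h`,
stencil `(1, -2, 1)/h²` with periodic boundary conditions. -/
noncomputable def lap (m : ℕ) [NeZero m] (h : ℝ) : Matrix (ZMod m) (ZMod m) ℝ :=
  Matrix.of fun i j =>
    ((if i = j then (-2 : ℝ) else 0) + (if i = j + 1 then 1 else 0) +
      (if j = i + 1 then 1 else 0)) / h ^ 2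

/-- The diffusion-modelled covariance matrix
`(σ² ν L / h) (I - L² Δ_h)^{-M}` on an `m`-point periodic grid. -/
noncomputable def diffCov (m : ℕ) [NeZero m] (σ ν L h : ℝ) (M : ℕ) :
    Matrix (ZMod m) (ZMod m) ℝ :=
  (σ ^ 2 * ν * L / h) • ((1 - (L ^ 2) • lap m h) ^ M)⁻¹

/-- The spectral condition number `κ(A) = λ_max(A)/λ_min(A)` (via the real spectrum). -/
noncomputable def condNum {k : Type*} [Fintype k] [DecidableEq k]
    (A : Matrix k k ℝ) : ℝ :=
  sSup (spectrum ℝ A) / sInf (spectrum ℝ A)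


noncomputable def dftF (m : ℕ) [NeZero m] : Matrix (ZMod m) (ZMod m) ℂ :=
  Matrix.of fun p i => ZMod.stdAddChar (i * p)

noncomputable def dftG (m : ℕ) [NeZero m] : Matrix (ZMod m) (ZMod m) ℂ :=
  Matrix.of fun i p => ZMod.stdAddChar (-(i * p))

/-- frequency folding matrix -/
noncomputable def foldP (m n : ℕ) [NeZero m] [NeZero n] : Matrix (ZMod m) (ZMod n) ℂ :=
  Matrix.of fun i j => if ((j.val : ℕ) : ZMod m) = i then 1 else 0

/-- complexification -/
noncomputable def cx {k l : Type*} (A : Matrix k l ℝ) : Matrix k l ℂ := A.map (Complex.ofRealHom)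

lemma dftFG (m : ℕ) [NeZero m] : dftF m * dftG m = (m : ℂ) • 1 := by
  ext p q
  have h := AddChar.sum_mulShift (R := ZMod m) (p - q) (ZMod.isPrimitive_stdAddChar m)
  simp only [Matrix.mul_apply, dftF, dftG, Matrix.of_apply, ← AddChar.map_add_eq_mul]
  rw [show (∑ x : ZMod m, ZMod.stdAddChar (x * p + -(x * q)) : ℂ)
      = ∑ x : ZMod m, ZMod.stdAddChar (x * (p - q)) from
      Finset.sum_congr rfl fun x _ => by congr 1; ring, h]
  by_cases hpq : p = q
  · simp [hpq, ZMod.card]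
  · simp [hpq, sub_eq_zero]

lemma dftGF (m : ℕ) [NeZero m] : dftG m * dftF m = (m : ℂ) • 1 := by
  have hm : (m : ℂ) ≠ 0 := by exact_mod_cast NeZero.ne m
  have h : dftF m * ((m : ℂ)⁻¹ • dftG m) = 1 := by
    rw [Matrix.mul_smul, dftFG, smul_smul, inv_mul_cancel₀ hm, one_smul]
  have h2 := mul_eq_one_comm.mp h
  rw [Matrix.smul_mul] at h2
  rw [← h2, smul_smul, mul_inv_cancel₀ hm, one_smul]

lemma det_dftF (m : ℕ) [NeZero m] : (dftF m).det ≠ 0 := by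
  have hm : (m : ℂ) ≠ 0 := by exact_mod_cast NeZero.ne m
  intro h
  have := congrArg Matrix.det (dftFG m)
  rw [Matrix.det_mul, h, zero_mul, Matrix.det_smul, Matrix.det_one, mul_one] at this
  exact pow_ne_zero _ hm this.symm

lemma chi_nat (m : ℕ) [NeZero m] (a : ℕ) :
    (ZMod.stdAddChar ((a : ℕ) : ZMod m) : ℂ) = Complex.exp (2 * Real.pi * Complex.I * a / m) := by
  have := ZMod.stdAddChar_coe (N := m) (a : ℤ)
  simpa using this

lemma chi_sel (ζ m n : ℕ) [NeZero m] [NeZero n] (hn : n = ζ * m) (j : ZMod n) (p : ZMod m) :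
    (ZMod.stdAddChar (j * ((ζ * p.val : ℕ) : ZMod n)) : ℂ)
      = ZMod.stdAddChar (((j.val : ℕ) : ZMod m) * p) := by
  have e1 : j * ((ζ * p.val : ℕ) : ZMod n) = ((j.val * (ζ * p.val) : ℕ) : ZMod n) := by
    rw [Nat.cast_mul j.val, ZMod.natCast_zmod_val]
  have e2 : ((j.val : ℕ) : ZMod m) * p = ((j.val * p.val : ℕ) : ZMod m) := by
    rw [Nat.cast_mul j.val, ZMod.natCast_zmod_val p]
  rw [e1, e2, chi_nat, chi_nat]
  congr 1
  have hm : (m : ℂ) ≠ 0 := by exact_mod_cast NeZero.ne m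
  have hn0 : (n : ℂ) ≠ 0 := by exact_mod_cast NeZero.ne n
  have hnn : (n : ℂ) = ζ * m := by exact_mod_cast hn
  rw [div_eq_div_iff hn0 hm, hnn]
  push_cast
  ring

lemma sel_lt (ζ m n : ℕ) [NeZero m] (hζ : 0 < ζ) (hn : n = ζ * m) (p : ZMod m) :
    ζ * p.val < n := by
  rw [hn]; exact Nat.mul_lt_mul_of_pos_left (ZMod.val_lt p) hζ

lemma sel_iff (ζ m n : ℕ) [NeZero m] [NeZero n] (hζ : 0 < ζ) (hn : n = ζ * m)
    (q : ZMod n) (p : ZMod m) :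
    q.val = ζ * p.val ↔ q = ((ζ * p.val : ℕ) : ZMod n) := by
  constructor
  · intro h; rw [← h, ZMod.natCast_zmod_val]
  · intro h; rw [h, ZMod.val_natCast, Nat.mod_eq_of_lt (sel_lt ζ m n hζ hn p)]

lemma sel_F (ζ m n : ℕ) [NeZero m] [NeZero n] (hζ : 0 < ζ) (hn : n = ζ * m) :
    cx (selectionOp ζ m n) * dftF n = dftF m * foldP m n := by
  ext p j
  have : (cx (selectionOp ζ m n) * dftF n) p j
      = ZMod.stdAddChar (j * ((ζ * p.val : ℕ) : ZMod n)) := by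
    simp only [Matrix.mul_apply, cx, selectionOp, dftF, Matrix.map_apply, Matrix.of_apply,
      sel_iff ζ m n hζ hn]
    simp [apply_ite, ite_mul]
  rw [this, chi_sel ζ m n hn]
  simp [Matrix.mul_apply, dftF, foldP]

lemma G_selT (ζ m n : ℕ) [NeZero m] [NeZero n] (hζ : 0 < ζ) (hn : n = ζ * m) :
    dftG n * (cx (selectionOp ζ m n))ᵀ = (foldP m n)ᵀ * dftG m := by
  ext j p
  have : (dftG n * (cx (selectionOp ζ m n))ᵀ) j p
      = ZMod.stdAddChar (-(j * ((ζ * p.val : ℕ) : ZMod n))) := by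
    simp only [Matrix.mul_apply, cx, selectionOp, dftG, Matrix.map_apply, Matrix.of_apply,
      Matrix.transpose_apply, sel_iff ζ m n hζ hn]
    simp [apply_ite]
  rw [this, AddChar.map_neg_eq_inv, chi_sel ζ m n hn, ← AddChar.map_neg_eq_inv]
  simp [Matrix.mul_apply, dftG, foldP]

lemma selT_F (ζ m n : ℕ) [NeZero m] [NeZero n] (hζ : 0 < ζ) (hn : n = ζ * m) :
    (cx (selectionOp ζ m n))ᵀ * dftF m = (ζ : ℂ)⁻¹ • (dftF n * (foldP m n)ᵀ) := by
  have h : dftF n * (dftG n * (cx (selectionOp ζ m n))ᵀ) * dftF m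
      = dftF n * ((foldP m n)ᵀ * dftG m) * dftF m := by
    rw [G_selT ζ m n hζ hn]
  rw [← Matrix.mul_assoc, dftFG, Matrix.mul_assoc (dftF n), Matrix.mul_assoc _ (dftG m), dftGF,
    Matrix.smul_mul, Matrix.smul_mul, Matrix.one_mul, Matrix.mul_smul, Matrix.mul_smul,
    Matrix.mul_one] at h
  have hm : (m : ℂ) ≠ 0 := by exact_mod_cast NeZero.ne m
  have hz : (ζ : ℂ) ≠ 0 := by exact_mod_cast hζ.ne'
  have hn0 : (n : ℂ) ≠ 0 := by exact_mod_cast NeZero.ne n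
  have hnn : (n : ℂ) = ζ * m := by exact_mod_cast hn
  have h2 := congrArg (fun A => (n : ℂ)⁻¹ • A) h
  simp only [smul_smul, inv_mul_cancel₀ hn0, one_smul] at h2
  rw [h2]
  congr 1
  rw [hnn]; field_simp

lemma fiber_sum (ζ m n : ℕ) [NeZero m] [NeZero n] (hn : n = ζ * m) (i : ZMod m)
    (g : ℕ → ℂ) :
    (∑ j : ZMod n, if ((j.val : ℕ) : ZMod m) = i then g j.val else 0)
      = ∑ r ∈ Finset.range ζ, g (i.val + r * m) := by
  have hm : 0 < m := Nat.pos_of_ne_zero (NeZero.ne m)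
  have hlt : ∀ r < ζ, i.val + r * m < n := by
    intro r hr
    have h1 := ZMod.val_lt i
    have : (r + 1) * m ≤ ζ * m := Nat.mul_le_mul_right _ hr
    rw [hn]; nlinarith
  have hmod : ∀ j : ZMod n, ((j.val : ℕ) : ZMod m) = i → j.val % m = i.val := by
    intro j hj
    rw [← hj, ZMod.val_natCast]
  rw [← Finset.sum_filter]
  refine Finset.sum_nbij' (fun j => j.val / m) (fun r => ((i.val + r * m : ℕ) : ZMod n))
    ?_ ?_ ?_ ?_ ?_
  · intro j hj
    rw [Finset.mem_range]
    refine Nat.div_lt_of_lt_mul ?_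
    have := ZMod.val_lt j
    exact lt_of_lt_of_eq this (hn.trans (mul_comm _ _))
  · intro r hr
    rw [Finset.mem_range] at hr
    simp only [Finset.mem_filter, Finset.mem_univ, true_and]
    rw [ZMod.val_natCast, Nat.mod_eq_of_lt (hlt r hr)]
    simp
  · intro j hj
    simp only [Finset.mem_filter, Finset.mem_univ, true_and] at hj
    have h3 : i.val + j.val / m * m = j.val := by
      rw [← hmod j hj, mul_comm]; exact Nat.mod_add_div _ _
    rw [h3, ZMod.natCast_zmod_val]
  · intro r hr
    rw [Finset.mem_range] at hr
    rw [ZMod.val_natCast, Nat.mod_eq_of_lt (hlt r hr), Nat.add_mul_div_right _ _ hm,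
      Nat.div_eq_of_lt (ZMod.val_lt i), zero_add]
  · intro j hj
    simp only [Finset.mem_filter, Finset.mem_univ, true_and] at hj
    have h3 : i.val + j.val / m * m = j.val := by
      rw [← hmod j hj, mul_comm]; exact Nat.mod_add_div _ _
    rw [h3]

lemma fold_diag (ζ m n : ℕ) [NeZero m] [NeZero n] (hn : n = ζ * m) (g : ℕ → ℂ) :
    foldP m n * Matrix.diagonal (fun j : ZMod n => g j.val) * (foldP m n)ᵀ
      = Matrix.diagonal (fun i : ZMod m => ∑ r ∈ Finset.range ζ, g (i.val + r * m)) := by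
  ext i k
  rw [Matrix.mul_apply]
  simp only [Matrix.mul_diagonal, Matrix.transpose_apply, foldP, Matrix.of_apply]
  by_cases hik : i = k
  · subst hik
    rw [Matrix.diagonal_apply_eq, ← fiber_sum ζ m n hn]
    refine Finset.sum_congr rfl fun j _ => ?_
    split_ifs <;> simp
  · rw [Matrix.diagonal_apply_ne _ hik]
    refine Finset.sum_eq_zero fun j _ => ?_
    by_cases h1 : ((j.val : ℕ) : ZMod m) = i
    · have : ((j.val : ℕ) : ZMod m) ≠ k := fun h => hik (h1.symm.trans h)
      rw [if_neg this, mul_zero]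
    · rw [if_neg h1, zero_mul, zero_mul]

/-- symbol of the diffusion operator -/
noncomputable def symb (m : ℕ) (L h : ℝ) (a : ℕ) : ℝ :=
  1 + 4 * (L / h) ^ 2 * Real.sin (Real.pi * (a : ℝ) / m) ^ 2

lemma symb_pos (m : ℕ) (L h : ℝ) (a : ℕ) : 0 < symb m L h a := by
  unfold symb; positivity

lemma chi_cos (m : ℕ) [NeZero m] (i : ZMod m) :
    (ZMod.stdAddChar i + ZMod.stdAddChar (-i) : ℂ)
      = 2 - 4 * (Real.sin (Real.pi * (i.val : ℝ) / m) : ℂ) ^ 2 := by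
  have h1 : (ZMod.stdAddChar i : ℂ) = Complex.exp (2 * Real.pi * Complex.I * i.val / m) := by
    rw [← chi_nat, ZMod.natCast_zmod_val]
  rw [AddChar.map_neg_eq_inv, h1, ← Complex.exp_neg]
  set t : ℂ := Real.pi * (i.val : ℂ) / m with ht
  have h2 : ((Real.sin (Real.pi * (i.val : ℝ) / m) : ℝ) : ℂ) = Complex.sin t := by
    rw [ht]; push_cast; rfl
  rw [h2]
  have h3 : 2 * Real.pi * Complex.I * (i.val : ℂ) / m = (2 * t) * Complex.I := by
    rw [ht]; ring
  have h4 := Complex.two_cos (2 * t)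
  rw [h3, ← neg_mul, ← h4, Complex.cos_two_mul, Complex.cos_sq']
  ring

lemma lap_F (m : ℕ) [NeZero m] (h : ℝ) :
    cx (lap m h) * dftF m = dftF m * Matrix.diagonal (fun i : ZMod m =>
      (-4 * (Real.sin (Real.pi * (i.val : ℝ) / m) : ℂ) ^ 2 / h ^ 2)) := by
  ext p i
  rw [Matrix.mul_diagonal, Matrix.mul_apply]
  have e : ∀ x : ZMod m, (p = x + 1) ↔ (x = p - 1) := fun x =>
    ⟨fun h => by rw [h]; ring, fun h => by rw [h]; ring⟩
  have h0 : ∑ x, cx (lap m h) p x * dftF m x i =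
      (-2 * ZMod.stdAddChar (i * p) + ZMod.stdAddChar (i * (p - 1))
        + ZMod.stdAddChar (i * (p + 1))) / (h : ℂ) ^ 2 := by
    have : ∀ x, cx (lap m h) p x * dftF m x i =
      ((if p = x then -2 * ZMod.stdAddChar (i * x) else 0)
       + (if x = p - 1 then ZMod.stdAddChar (i * x) else 0)
       + (if x = p + 1 then ZMod.stdAddChar (i * x) else 0)) / (h : ℂ) ^ 2 := by
      intro x
      simp only [cx, lap, dftF, Matrix.map_apply, Matrix.of_apply, e]
      split_ifs <;> simp <;> ring
    rw [Finset.sum_congr rfl fun x _ => this x, ← Finset.sum_div]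
    simp [Finset.sum_add_distrib]
  rw [h0]
  have a1 : (ZMod.stdAddChar (i * (p - 1)) : ℂ)
      = ZMod.stdAddChar (i * p) * ZMod.stdAddChar (-i) := by
    rw [← AddChar.map_add_eq_mul]; congr 1; ring
  have a2 : (ZMod.stdAddChar (i * (p + 1)) : ℂ)
      = ZMod.stdAddChar (i * p) * ZMod.stdAddChar i := by
    rw [← AddChar.map_add_eq_mul]; congr 1; ring
  have hc := chi_cos m i
  rw [a1, a2]
  simp only [dftF, Matrix.of_apply]
  rw [eq_sub_iff_add_eq] at hc
  have : (ZMod.stdAddChar (-i) : ℂ) = 2 - 4 * (Real.sin (Real.pi * (i.val : ℝ) / m) : ℂ) ^ 2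
      - ZMod.stdAddChar i := by linear_combination hc
  rw [this]
  ring

lemma cx_mul {k l r : Type*} [Fintype l] (A : Matrix k l ℝ) (B : Matrix l r ℝ) :
    cx (A * B) = cx A * cx B := Matrix.map_mul

lemma cx_smul {k l : Type*} (c : ℝ) (A : Matrix k l ℝ) : cx (c • A) = (c : ℂ) • cx A := by
  ext; simp [cx]

lemma cx_one {k : Type*} [DecidableEq k] : cx (1 : Matrix k k ℝ) = 1 := by
  simp [cx]

noncomputable def opA (m : ℕ) [NeZero m] (L h : ℝ) : Matrix (ZMod m) (ZMod m) ℝ :=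
  1 - (L ^ 2) • lap m h

noncomputable def dg (m : ℕ) [NeZero m] (L h : ℝ) : Matrix (ZMod m) (ZMod m) ℂ :=
  Matrix.diagonal (fun i : ZMod m => ((symb m L h i.val : ℝ) : ℂ))

lemma opA_F (m : ℕ) [NeZero m] (L h : ℝ) :
    cx (opA m L h) * dftF m = dftF m * dg m L h := by
  have : cx (opA m L h) = 1 - ((L : ℂ) ^ 2) • cx (lap m h) := by
    ext i j
    simp [cx, opA, Matrix.one_apply, apply_ite]
  rw [this, Matrix.sub_mul, Matrix.smul_mul, lap_F]
  ext p i
  simp only [Matrix.sub_apply, Matrix.smul_apply, Matrix.mul_diagonal, dg, Matrix.one_mul,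
    smul_eq_mul, symb]
  push_cast
  ring

lemma opA_pow_F (m : ℕ) [NeZero m] (L h : ℝ) (M : ℕ) :
    cx (opA m L h ^ M) * dftF m = dftF m * dg m L h ^ M := by
  induction M with
  | zero => simp [cx_one]
  | succ k ih =>
    rw [pow_succ, cx_mul, Matrix.mul_assoc, opA_F, ← Matrix.mul_assoc, ih, Matrix.mul_assoc,
      ← pow_succ]

lemma det_opA (m : ℕ) [NeZero m] (L h : ℝ) : (opA m L h).det ≠ 0 := by
  intro h0
  have h1 : (cx (opA m L h)).det = 0 := by
    have := RingHom.map_det Complex.ofRealHom (opA m L h)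
    rw [h0, map_zero] at this
    exact this.symm
  have h2 := congrArg Matrix.det (opA_F m L h)
  rw [Matrix.det_mul, Matrix.det_mul, h1, zero_mul] at h2
  rcases mul_eq_zero.mp h2.symm with h3 | h3
  · exact det_dftF m h3
  · rw [dg, Matrix.det_diagonal, Finset.prod_eq_zero_iff] at h3
    obtain ⟨i, _, hi⟩ := h3
    exact (symb_pos m L h i.val).ne' (by exact_mod_cast hi)

lemma isUnit_opA (m : ℕ) [NeZero m] (L h : ℝ) (M : ℕ) : IsUnit (opA m L h ^ M).det := by
  rw [Matrix.det_pow]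
  exact (isUnit_iff_ne_zero.mpr (det_opA m L h)).pow M

lemma diffCov_inv_F (m : ℕ) [NeZero m] (σ ν L h : ℝ) (M : ℕ) (hc : σ ^ 2 * ν * L / h ≠ 0) :
    cx ((diffCov m σ ν L h M)⁻¹) * dftF m = dftF m *
      Matrix.diagonal (fun i : ZMod m =>
        (((σ ^ 2 * ν * L / h)⁻¹ * symb m L h i.val ^ M : ℝ) : ℂ)) := by
  have h1 : (diffCov m σ ν L h M)⁻¹ = (σ ^ 2 * ν * L / h)⁻¹ • opA m L h ^ M := by
    apply Matrix.inv_eq_right_inv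
    rw [diffCov, Matrix.smul_mul, Matrix.mul_smul, smul_smul, mul_inv_cancel₀ hc, one_smul]
    exact Matrix.nonsing_inv_mul _ (isUnit_opA m L h M)
  rw [h1, cx_smul, Matrix.smul_mul, opA_pow_F, dg, Matrix.diagonal_pow]
  ext p i
  simp only [Matrix.smul_apply, Matrix.mul_diagonal, smul_eq_mul, Pi.pow_apply]
  push_cast
  ring

lemma diffCov_F (m : ℕ) [NeZero m] (σ ν L h : ℝ) (M : ℕ) :
    cx (diffCov m σ ν L h M) * dftF m = dftF m *
      Matrix.diagonal (fun i : ZMod m =>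
        (((σ ^ 2 * ν * L / h) / symb m L h i.val ^ M : ℝ) : ℂ)) := by
  set D := Matrix.diagonal (fun i : ZMod m =>
        (((σ ^ 2 * ν * L / h) / symb m L h i.val ^ M : ℝ) : ℂ)) with hD
  have h1 : diffCov m σ ν L h M * opA m L h ^ M = (σ ^ 2 * ν * L / h) • 1 := by
    rw [diffCov, Matrix.smul_mul]
    congr 1
    exact Matrix.nonsing_inv_mul _ (isUnit_opA m L h M)
  have h2 : dg m L h ^ M * D = ((σ ^ 2 * ν * L / h : ℝ) : ℂ) • 1 := by
    rw [dg, Matrix.diagonal_pow, hD, Matrix.diagonal_mul_diagonal, Matrix.smul_one_eq_diagonal]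
    congr 1
    ext i
    have := (symb_pos m L h i.val).ne'
    rw [Pi.pow_apply, ← Complex.ofReal_pow, ← Complex.ofReal_mul]
    congr 1
    field_simp
  set c : ℝ := σ ^ 2 * ν * L / h with hcdef
  by_cases hc : c = 0
  · have hz : diffCov m σ ν L h M = 0 := by rw [diffCov, ← hcdef, hc, zero_smul]
    have hD0 : D = 0 := by rw [hD, hc]; simp
    rw [hz, hD0]; ext; simp [cx]
  have hcc : (c : ℂ) ≠ 0 := by exact_mod_cast hc
  have h3 : cx (diffCov m σ ν L h M) * (cx (opA m L h ^ M) * dftF m) * D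
      = (c : ℂ) • (dftF m * D) := by
    rw [← Matrix.mul_assoc, ← cx_mul, h1, cx_smul, cx_one, Matrix.smul_mul, Matrix.one_mul,
      Matrix.smul_mul]
  rw [opA_pow_F, Matrix.mul_assoc, Matrix.mul_assoc, h2, Matrix.mul_smul, Matrix.mul_smul,
    Matrix.mul_one] at h3
  exact smul_right_injective _ hcc h3

lemma charpoly_of_F (m : ℕ) [NeZero m] (T : Matrix (ZMod m) (ZMod m) ℝ) (d : ZMod m → ℝ)
    (h : cx T * dftF m = dftF m * Matrix.diagonal (fun i => (d i : ℂ))) :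
    T.charpoly = ∏ i : ZMod m, (X - C (d i)) := by
  apply Polynomial.map_injective Complex.ofRealHom Complex.ofRealHom.injective
  rw [← Matrix.charpoly_map]
  have hu : IsUnit (dftF m) := by
    rw [Matrix.isUnit_iff_isUnit_det]; exact isUnit_iff_ne_zero.mpr (det_dftF m)
  obtain ⟨u, hu⟩ := hu
  have h1 : cx T = u.val * Matrix.diagonal (fun i => (d i : ℂ)) * u.val⁻¹ := by
    rw [hu, ← h, Matrix.mul_assoc, Matrix.mul_nonsing_inv, Matrix.mul_one]
    exact isUnit_iff_ne_zero.mpr (det_dftF m)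
  change (cx T).charpoly = _
  rw [h1, Matrix.charpoly_units_conj, Matrix.charpoly_diagonal, Polynomial.map_prod]
  simp

/-- For the diffusion-modelled circulant covariances
`B = (σ_b²ν_b L_b/h_b)(I - L_b²Δ_{h_b})^{-M_b}` (size `n`) and
`R = (σ_o²ν_o L_o/h_o)(I - L_o²Δ_{h_o})^{-M_o}` (size `m`), with `U` the symmetric
square root of `B`, `H` the uniform selection operator, `n = ζm`, `h_o = ζ h_b`,
the matrix `S = I + Uᵀ Hᵀ R⁻¹ H U` has eigenvalues (with multiplicity, encoded via
the characteristic polynomial): `1` with multiplicity `n - m`, and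
`1 + α Σ_{r<ζ} [1+4L̃_o² sin²(πi/m)]^{M_o} / [1+4L̃_b² sin²(π(i+rm)/(ζm))]^{M_b}`
for `i ∈ {0,…,m-1}`, where `α = σ_b²ν_b L_b/(σ_o²ν_o L_o)`. -/
theorem stmt8 (ζ m n : ℕ) [NeZero m] [NeZero n] (hζ : 0 < ζ) (hn : n = ζ * m)
    (hmn : m < n)
    (σb νb Lb hb σo νo Lo ho : ℝ)
    (hσb : 0 < σb) (hνb : 0 < νb) (hLb : 0 < Lb) (hhb : 0 < hb)
    (hσo : 0 < σo) (hνo : 0 < νo) (hLo : 0 < Lo) (hho : ho = ζ * hb)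
    (Mb Mo : ℕ) (hMb : 0 < Mb) (hMo : 0 < Mo)
    (B U : Matrix (ZMod n) (ZMod n) ℝ) (R : Matrix (ZMod m) (ZMod m) ℝ)
    (hB : B = diffCov n σb νb Lb hb Mb) (hR : R = diffCov m σo νo Lo ho Mo)
    (hUsymm : U.IsSymm) (hUpd : U.PosDef) (hUU : U * U = B)
    (H : Matrix (ZMod m) (ZMod n) ℝ) (hH : H = selectionOp ζ m n)
    (S : Matrix (ZMod n) (ZMod n) ℝ)
    (hS : S = 1 + U.transpose * H.transpose * R⁻¹ * H * U) :
    S.charpoly = (Polynomial.X - 1) ^ (n - m) *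
      ∏ i : ZMod m, (Polynomial.X - Polynomial.C
        (1 + (σb ^ 2 * νb * Lb / (σo ^ 2 * νo * Lo)) *
          ∑ r ∈ Finset.range ζ,
            (1 + 4 * (Lo / ho) ^ 2 * Real.sin (Real.pi * (i.val : ℝ) / m) ^ 2) ^ Mo /
              (1 + 4 * (Lb / hb) ^ 2 *
                Real.sin (Real.pi * ((i.val : ℝ) + r * m) / (ζ * m)) ^ 2) ^ Mb)) := by
  have hm0 : (m : ℝ) ≠ 0 := by exact_mod_cast NeZero.ne m
  have hz : (ζ : ℝ) ≠ 0 := by exact_mod_cast hζ.ne'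
  have hho0 : 0 < ho := by rw [hho]; exact mul_pos (by exact_mod_cast hζ) hhb
  have hco : σo ^ 2 * νo * Lo / ho ≠ 0 := by positivity
  set V : Matrix (ZMod n) (ZMod m) ℝ := U.transpose * H.transpose with hV
  set W : Matrix (ZMod m) (ZMod n) ℝ := R⁻¹ * H * U with hW
  have hS1 : S - Matrix.scalar (ZMod n) 1 = V * W := by
    rw [hS, map_one, add_sub_cancel_left, hV, hW]
    simp only [Matrix.mul_assoc]
  have hWV : W * V = R⁻¹ * (H * (B * Hᵀ)) := by
    rw [hW, hV, hUsymm.eq, ← hUU]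
    simp only [Matrix.mul_assoc]
  set e : ZMod m → ℝ := fun i => (σb ^ 2 * νb * Lb / (σo ^ 2 * νo * Lo)) *
          ∑ r ∈ Finset.range ζ,
            (1 + 4 * (Lo / ho) ^ 2 * Real.sin (Real.pi * (i.val : ℝ) / m) ^ 2) ^ Mo /
              (1 + 4 * (Lb / hb) ^ 2 *
                Real.sin (Real.pi * ((i.val : ℝ) + r * m) / (ζ * m)) ^ 2) ^ Mb with he
  have hT : (W * V).charpoly = ∏ i : ZMod m, (X - C (e i)) := by
    apply charpoly_of_F
    have hHT : cx (Hᵀ) = (cx H)ᵀ := rfl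
    rw [hWV, cx_mul, cx_mul, cx_mul, hHT, Matrix.mul_assoc, Matrix.mul_assoc, Matrix.mul_assoc,
      hH, selT_F ζ m n hζ hn, Matrix.mul_smul, Matrix.mul_smul, Matrix.mul_smul,
      ← Matrix.mul_assoc (cx B), hB, diffCov_F, Matrix.mul_assoc (dftF n),
      ← Matrix.mul_assoc (cx (selectionOp ζ m n)), sel_F ζ m n hζ hn, Matrix.mul_assoc (dftF m),
      ← Matrix.mul_assoc (foldP m n),
      fold_diag ζ m n hn (fun a => ((σb ^ 2 * νb * Lb / hb / symb n Lb hb a ^ Mb : ℝ) : ℂ)),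
      ← Matrix.mul_assoc, hR, diffCov_inv_F _ _ _ _ _ _ hco, Matrix.mul_assoc,
      Matrix.diagonal_mul_diagonal, ← Matrix.mul_smul, ← Matrix.diagonal_smul]
    congr 2
    ext i
    simp only [Pi.smul_apply, smul_eq_mul]
    rw [← Complex.ofReal_sum, ← Complex.ofReal_mul, ← Complex.ofReal_natCast,
      ← Complex.ofReal_inv, ← Complex.ofReal_mul]
    congr 1
    simp only [he]
    rw [Finset.mul_sum, Finset.mul_sum, Finset.mul_sum]
    refine Finset.sum_congr rfl fun r _ => ?_
    have hs1 : (1 + 4 * (Lo / ho) ^ 2 * Real.sin (Real.pi * (i.val : ℝ) / m) ^ 2)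
        = symb m Lo ho i.val := rfl
    have hs2 : (1 + 4 * (Lb / hb) ^ 2 *
                Real.sin (Real.pi * ((i.val : ℝ) + r * m) / (ζ * m)) ^ 2)
        = symb n Lb hb (i.val + r * m) := by
      unfold symb; rw [hn]; push_cast; rfl
    rw [hs1, hs2]
    have p1 := (symb_pos n Lb hb (i.val + r * m)).ne'
    generalize symb n Lb hb (i.val + r * m) = y at *
    generalize symb m Lo ho i.val = x at *
    rw [hho]
    field_simp
  have hcard : Fintype.card (ZMod m) ≤ Fintype.card (ZMod n) := by
    rw [ZMod.card, ZMod.card]; exact hmn.le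
  have h1 := Matrix.charpoly_mul_comm_of_le V W hcard
  rw [ZMod.card, ZMod.card, hT, ← hS1, Matrix.charpoly_sub_scalar] at h1
  have h2 := congrArg (fun p : ℝ[X] => p.comp (X - C 1)) h1
  simp only [Polynomial.comp_assoc] at h2
  have hXX : ((X : ℝ[X]) + C 1).comp (X - C 1) = X := by simp
  rw [hXX, Polynomial.comp_X] at h2
  rw [h2, Polynomial.mul_comp, Polynomial.prod_comp, Polynomial.pow_comp, Polynomial.X_comp,
    Polynomial.C_1]
  congr 1
  refine Finset.prod_congr rfl fun i _ => ?_
  rw [Polynomial.sub_comp, Polynomial.X_comp, Polynomial.C_comp, Polynomial.C_add,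
    Polynomial.C_1]
  ring
end

section
/- With S as in the previous theorem and m < n, the minimum eigenvalue of S equals 1, and hence the condition number κ(S) = λ_max(S)/λ_min(S) equals λ_max(S) = max_{0≤i≤m−1} λ_i(S), which is bounded above by the maximum over i of the explicit expression 1 + α Σ_{r=0}^{ζ−1} [1+4L̃_o² sin²(πi/m)]^{M_o}/[1+4L̃_b² sin²(π(i+rm)/(ζm))]^{M_b}. -/
open Matrix Polynomial

/-- Complexification of a real matrix. -/
noncomputable def cplx {k l : Type*} (A : Matrix k l ℝ) : Matrix k l ℂ :=
  A.map Complex.ofRealHom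

/-- Fourier vector with natural frequency. -/
noncomputable def ff (N : ℕ) [NeZero N] (k : ℕ) : ZMod N → ℂ :=
  fun q => ZMod.stdAddChar (-(q * (k : ZMod N)))

lemma ff_eq (N : ℕ) [NeZero N] (k : ℕ) (q : ZMod N) :
    ff N k q = Complex.exp (-(2 * Real.pi * Complex.I * ((q.val : ℂ) * k) / N)) := by
  have h : (-(q * (k : ZMod N))) = (((-(q.val * k : ℤ)) : ℤ) : ZMod N) := by
    push_cast
    simp
  rw [ff, h, ZMod.stdAddChar_coe]
  congr 1
  push_cast
  ring

lemma cplx_mul {k l p : Type*} [Fintype l] (A : Matrix k l ℝ) (B : Matrix l p ℝ) :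
    cplx (A * B) = cplx A * cplx B := by
  simp [cplx, Matrix.map_mul]

lemma cplx_mulVec {k l : Type*} [Fintype l] (A : Matrix k l ℝ) (v : l → ℝ) :
    (fun i => ((A *ᵥ v) i : ℂ)) = cplx A *ᵥ (fun j => (v j : ℂ)) := by
  ext i
  simp [cplx, Matrix.mulVec, dotProduct]

lemma fourier_eig {N : ℕ} [NeZero N] (A : Matrix (ZMod N) (ZMod N) ℝ) (lam : ZMod N → ℝ)
    (hA : ∀ i : ZMod N, cplx A *ᵥ ff N i.val = (lam i : ℂ) • ff N i.val)
    (v : ZMod N → ℝ) (hv : v ≠ 0) (t : ℝ) (ht : A *ᵥ v = t • v) : ∃ i, t = lam i := by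
  have rep : ∀ u : ZMod N → ℂ, ZMod.dft u = ∑ i, u i • ff N i.val := by
    intro u
    ext k
    rw [ZMod.dft_apply]
    simp only [Finset.sum_apply, Pi.smul_apply, ff, smul_eq_mul, ZMod.natCast_val, ZMod.cast_id', id]
    refine Finset.sum_congr rfl fun i _ => ?_
    rw [mul_comm, mul_comm i k]
  set w : ZMod N → ℂ := fun j => (v j : ℂ) with hw
  obtain ⟨u, hu⟩ := (ZMod.dft (N := N) (E := ℂ)).surjective w
  have h1 : cplx A *ᵥ w = (t : ℂ) • w := by
    rw [hw, ← cplx_mulVec, ht]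
    ext i; simp
  have h2 : cplx A *ᵥ w = ZMod.dft (fun i => (lam i : ℂ) * u i) := by
    rw [← hu, rep, rep, Matrix.mulVec_sum]
    refine Finset.sum_congr rfl fun i _ => ?_
    rw [Matrix.mulVec_smul, hA, smul_smul, mul_comm]
  have h3 : ZMod.dft (fun i => (lam i : ℂ) * u i) = ZMod.dft ((t : ℂ) • u) := by
    rw [← h2, h1, map_smul, hu]
  have h4 := (ZMod.dft (N := N) (E := ℂ)).injective h3
  have hune : u ≠ 0 := by
    rintro rfl
    apply hv
    rw [map_zero] at hu
    ext j
    have := congrFun hu j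
    simpa [hw, eq_comm] using this
  obtain ⟨i, hi⟩ := Function.ne_iff.mp hune
  refine ⟨i, ?_⟩
  have h5 := congrFun h4 i
  simp only [Pi.smul_apply, smul_eq_mul] at h5
  have h6 := mul_right_cancel₀ hi h5
  exact_mod_cast h6.symm

lemma lap_ff (N : ℕ) [NeZero N] (h : ℝ) (k : ℕ) :
    cplx (lap N h) *ᵥ ff N k =
      ((-(4 * Real.sin (Real.pi * k / N) ^ 2 / h ^ 2) : ℝ) : ℂ) • ff N k := by
  have hs : ZMod.stdAddChar (k : ZMod N) + ZMod.stdAddChar (-(k : ZMod N)) - 2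
      = ((-(4 * Real.sin (Real.pi * k / N) ^ 2) : ℝ) : ℂ) := by
    have e1 : ZMod.stdAddChar (k : ZMod N) = Complex.exp (((2 * (Real.pi * k / N) : ℝ) : ℂ) * Complex.I) := by
      have := ZMod.stdAddChar_coe (N := N) (k : ℤ)
      push_cast at this
      rw [this]; congr 1; push_cast; ring
    have e2 : ZMod.stdAddChar (-(k : ZMod N)) = Complex.exp (-((2 * (Real.pi * k / N) : ℝ) : ℂ) * Complex.I) := by
      have := ZMod.stdAddChar_coe (N := N) (-k : ℤ)
      push_cast at this
      rw [this]; congr 1; push_cast; ring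
    rw [e1, e2, ← Complex.two_cos, ← Complex.ofReal_cos, Real.cos_two_mul, Real.cos_sq']
    push_cast
    ring
  ext q
  have hm : ff N k (q - 1) = ff N k q * ZMod.stdAddChar (k : ZMod N) := by
    simp only [ff]
    rw [← AddChar.map_add_eq_mul]; congr 1; ring
  have hp : ff N k (q + 1) = ff N k q * ZMod.stdAddChar (-(k : ZMod N)) := by
    simp only [ff]
    rw [← AddChar.map_add_eq_mul]; congr 1; ring
  have : (cplx (lap N h) *ᵥ ff N k) q =
      (-2 * ff N k q + ff N k (q - 1) + ff N k (q + 1)) / (h : ℂ) ^ 2 := by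
    have key : ∀ j, cplx (lap N h) q j * ff N k j =
        ((if q = j then -2 * ff N k j else 0) + (if q - 1 = j then ff N k j else 0)
          + (if q + 1 = j then ff N k j else 0)) / (h : ℂ) ^ 2 := by
      intro j
      have c1 : (q - 1 = j) ↔ (q = j + 1) := sub_eq_iff_eq_add
      have c2 : (q + 1 = j) ↔ (j = q + 1) := eq_comm
      simp only [cplx, lap, Matrix.map_apply, Matrix.of_apply, c1, c2]
      split_ifs <;> simp <;> ring
    simp only [Matrix.mulVec, dotProduct]
    rw [Finset.sum_congr rfl fun j _ => key j, ← Finset.sum_div, Finset.sum_add_distrib,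
      Finset.sum_add_distrib]
    simp
  rw [this, hm, hp, Pi.smul_apply, smul_eq_mul]
  have e : -2 * ff N k q + ff N k q * ZMod.stdAddChar (k : ZMod N)
      + ff N k q * ZMod.stdAddChar (-(k : ZMod N)) =
      (ZMod.stdAddChar (k : ZMod N) + ZMod.stdAddChar (-(k : ZMod N)) - 2) * ff N k q := by ring
  rw [e, hs]
  push_cast
  ring

/-- Symbol of the diffusion operator. -/
noncomputable def dsym (N : ℕ) (L h : ℝ) (k : ℕ) : ℝ :=
  1 + 4 * (L / h) ^ 2 * Real.sin (Real.pi * k / N) ^ 2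

lemma dsym_pos (N : ℕ) (L h : ℝ) (k : ℕ) : 0 < dsym N L h k := by
  unfold dsym; positivity

lemma D_ff (N : ℕ) [NeZero N] (L h : ℝ) (k : ℕ) :
    cplx (1 - L ^ 2 • lap N h) *ᵥ ff N k = (dsym N L h k : ℂ) • ff N k := by
  have : cplx (1 - L ^ 2 • lap N h) = 1 - ((L ^ 2 : ℝ) : ℂ) • cplx (lap N h) := by
    ext i j
    by_cases hij : i = j <;> simp [cplx, hij]
  rw [this, Matrix.sub_mulVec, Matrix.smul_mulVec, lap_ff, Matrix.one_mulVec, smul_smul]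
  ext q
  simp only [Pi.sub_apply, Pi.smul_apply, smul_eq_mul, dsym]
  push_cast
  ring

lemma Dpow_ff (N : ℕ) [NeZero N] (L h : ℝ) (M k : ℕ) :
    cplx ((1 - L ^ 2 • lap N h) ^ M) *ᵥ ff N k = ((dsym N L h k ^ M : ℝ) : ℂ) • ff N k := by
  induction M with
  | zero =>
    have : cplx (1 : Matrix (ZMod N) (ZMod N) ℝ) = 1 := by simp [cplx]
    simp [this]
  | succ M ih =>
    rw [pow_succ, cplx_mul, ← Matrix.mulVec_mulVec, D_ff, Matrix.mulVec_smul, ih, smul_smul]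
    congr 1
    push_cast
    ring

lemma Dpow_det (N : ℕ) [NeZero N] (L h : ℝ) (M : ℕ) :
    IsUnit ((1 - L ^ 2 • lap N h) ^ M).det := by
  rw [isUnit_iff_ne_zero]
  intro h0
  obtain ⟨v, hv, hv0⟩ := Matrix.exists_mulVec_eq_zero_iff.mpr h0
  obtain ⟨i, hi⟩ := fourier_eig _ (fun i => dsym N L h i.val ^ M) (fun i => Dpow_ff N L h M i.val)
    v hv 0 (by rw [hv0, zero_smul])
  exact (pow_pos (dsym_pos N L h i.val) M).ne hi

lemma cov_ff (N : ℕ) [NeZero N] (σ ν L h : ℝ) (M k : ℕ) :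
    cplx (diffCov N σ ν L h M) *ᵥ ff N k =
      ((σ ^ 2 * ν * L / h / dsym N L h k ^ M : ℝ) : ℂ) • ff N k := by
  set P := (1 - L ^ 2 • lap N h) ^ M with hP
  have h1 : cplx (diffCov N σ ν L h M) = ((σ ^ 2 * ν * L / h : ℝ) : ℂ) • cplx P⁻¹ := by
    ext i j; simp [cplx, diffCov, hP]
  have h2 : cplx P⁻¹ * cplx P = 1 := by
    rw [← cplx_mul, Matrix.nonsing_inv_mul _ (Dpow_det N L h M)]; simp [cplx]
  have hd : ((dsym N L h k ^ M : ℝ) : ℂ) ≠ 0 := by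
    exact_mod_cast (pow_pos (dsym_pos N L h k) M).ne'
  have h3 : ((dsym N L h k ^ M : ℝ) : ℂ) • (cplx P⁻¹ *ᵥ ff N k) = ff N k := by
    rw [← Matrix.mulVec_smul, ← Dpow_ff, Matrix.mulVec_mulVec, h2, Matrix.one_mulVec]
  have h4 : cplx P⁻¹ *ᵥ ff N k = ((dsym N L h k ^ M : ℝ) : ℂ)⁻¹ • ff N k := by
    rw [← h3, smul_smul, h3, inv_mul_cancel₀ hd, one_smul]
  rw [h1, Matrix.smul_mulVec, h4, smul_smul]
  congr 1
  push_cast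
  ring

lemma covinv_ff (N : ℕ) [NeZero N] (σ ν L h : ℝ) (M k : ℕ) (hc : σ ^ 2 * ν * L / h ≠ 0) :
    cplx (diffCov N σ ν L h M)⁻¹ *ᵥ ff N k =
      (((σ ^ 2 * ν * L / h)⁻¹ * dsym N L h k ^ M : ℝ) : ℂ) • ff N k := by
  set c := σ ^ 2 * ν * L / h with hcdef
  set P := (1 - L ^ 2 • lap N h) ^ M with hP
  have h0 : (diffCov N σ ν L h M)⁻¹ = c⁻¹ • P := by
    apply Matrix.inv_eq_right_inv
    rw [diffCov, Matrix.smul_mul, Matrix.mul_smul, smul_smul,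
      Matrix.nonsing_inv_mul _ (Dpow_det N L h M), mul_inv_cancel₀ hc, one_smul]
  have h1 : cplx (c⁻¹ • P) = ((c⁻¹ : ℝ) : ℂ) • cplx P := by
    ext i j; simp [cplx]
  rw [h0, h1, Matrix.smul_mulVec, Dpow_ff, smul_smul]
  congr 1
  push_cast
  ring

lemma sel_ff (ζ m n : ℕ) [NeZero m] [NeZero n] (hζ : 0 < ζ) (hn : n = ζ * m) (i r : ℕ) :
    cplx (selectionOp ζ m n) *ᵥ ff n (i + r * m) = ff m i := by
  have hm0 : (m : ℂ) ≠ 0 := NeZero.ne _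
  have hz0 : (ζ : ℂ) ≠ 0 := by exact_mod_cast hζ.ne'
  ext p
  have hlt : ζ * p.val < n := by
    rw [hn]; exact Nat.mul_lt_mul_of_pos_left (ZMod.val_lt p) hζ
  have hval : ((ζ * p.val : ℕ) : ZMod n).val = ζ * p.val := ZMod.val_cast_of_lt hlt
  have key : ∀ q, cplx (selectionOp ζ m n) p q * ff n (i + r * m) q =
      if q = ((ζ * p.val : ℕ) : ZMod n) then ff n (i + r * m) q else 0 := by
    intro q
    have : q = ((ζ * p.val : ℕ) : ZMod n) ↔ q.val = ζ * p.val := by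
      rw [← (ZMod.val_injective n).eq_iff, hval]
    simp only [cplx, selectionOp, Matrix.map_apply, Matrix.of_apply, this]
    split_ifs <;> simp
  simp only [Matrix.mulVec, dotProduct]
  rw [Finset.sum_congr rfl fun q _ => key q]
  simp only [Finset.sum_ite_eq', Finset.mem_univ, if_true]
  rw [ff_eq, ff_eq, hval, Complex.exp_eq_exp_iff_exists_int]
  refine ⟨-(p.val * r : ℤ), ?_⟩
  rw [hn]
  push_cast
  field_simp
  ring

lemma selT_ff (ζ m n : ℕ) [NeZero m] [NeZero n] (hζ : 0 < ζ) (hn : n = ζ * m) (i : ℕ) :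
    cplx (selectionOp ζ m n)ᵀ *ᵥ ff m i =
      (ζ : ℂ)⁻¹ • ∑ r ∈ Finset.range ζ, ff n (i + r * m) := by
  have hm0 : (m : ℂ) ≠ 0 := NeZero.ne _
  have hz0 : (ζ : ℂ) ≠ 0 := by exact_mod_cast hζ.ne'
  ext q
  simp only [Pi.smul_apply, Finset.sum_apply, smul_eq_mul]
  set x : ℂ := Complex.exp (-(2 * Real.pi * Complex.I * (q.val : ℂ) / ζ)) with hx
  have hf : ∀ r, ff n (i + r * m) q = ff n i q * x ^ r := by
    intro r
    rw [ff_eq, ff_eq, hx, ← Complex.exp_nat_mul, ← Complex.exp_add]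
    congr 1
    have hnc : (n : ℂ) = ζ * m := by exact_mod_cast hn
    rw [hnc]
    push_cast
    field_simp
    ring
  have hxz : x ^ ζ = 1 := by
    rw [hx, ← Complex.exp_nat_mul, Complex.exp_eq_one_iff]
    refine ⟨-(q.val : ℤ), ?_⟩
    push_cast
    field_simp
  rw [Finset.sum_congr rfl fun r _ => hf r, ← Finset.mul_sum]
  simp only [Matrix.mulVec, dotProduct]
  by_cases hq : ζ ∣ q.val
  · obtain ⟨a, ha⟩ := hq
    have ham : a < m := by
      have := ZMod.val_lt q
      rw [ha, hn] at this
      exact Nat.lt_of_mul_lt_mul_left this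
    have hval : ((a : ℕ) : ZMod m).val = a := ZMod.val_cast_of_lt ham
    have key : ∀ p, cplx (selectionOp ζ m n)ᵀ q p * ff m i p =
        if p = (a : ZMod m) then ff m i p else 0 := by
      intro p
      have : p = (a : ZMod m) ↔ q.val = ζ * p.val := by
        rw [← (ZMod.val_injective m).eq_iff, hval, ha]
        constructor
        · rintro h; rw [h]
        · intro h; exact (Nat.eq_of_mul_eq_mul_left hζ h).symm
      simp only [cplx, selectionOp, Matrix.map_apply, Matrix.transpose_apply, Matrix.of_apply, this]
      split_ifs <;> simp
    have hx1 : x = 1 := by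
      rw [hx, Complex.exp_eq_one_iff]
      refine ⟨-(a : ℤ), ?_⟩
      rw [ha]
      push_cast
      field_simp
    rw [Finset.sum_congr rfl fun q _ => key q]
    simp only [Finset.sum_ite_eq', Finset.mem_univ, if_true, hx1, one_pow, Finset.sum_const,
      Finset.card_range, nsmul_eq_mul, mul_one]
    rw [mul_comm (ff n i q), inv_mul_cancel_left₀ hz0, ff_eq, ff_eq, hval, ha, hn]
    congr 1
    push_cast
    field_simp
  · have hx1 : x ≠ 1 := by
      rw [hx, Ne, Complex.exp_eq_one_iff]
      rintro ⟨b, hb⟩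
      apply hq
      have hpi : (2 * Real.pi * Complex.I : ℂ) ≠ 0 := Complex.two_pi_I_ne_zero
      have h1 : (2 * Real.pi * Complex.I : ℂ) * (q.val : ℂ) =
          (2 * Real.pi * Complex.I : ℂ) * (ζ * (-b)) := by
        have : (2 * Real.pi * Complex.I * (q.val : ℂ)) =
            -(-(2 * Real.pi * Complex.I * (q.val : ℂ) / ζ)) * ζ := by field_simp
        rw [this, hb]; ring
      have h2 := mul_left_cancel₀ hpi h1
      have h3 : (q.val : ℤ) = ζ * (-b) := by exact_mod_cast h2
      exact Int.natCast_dvd_natCast.mp ⟨-b, h3⟩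
    rw [geom_sum_eq hx1, hxz, sub_self, zero_div, mul_zero, mul_zero]
    apply Finset.sum_eq_zero
    intro p _
    have : ¬ q.val = ζ * p.val := fun h => hq ⟨_, h⟩
    simp [cplx, selectionOp, this]

/-- With `S` as in the previous theorem and `m < n`, the minimum
eigenvalue of `S` equals `1`, hence the condition number
`κ(S) = λ_max(S)/λ_min(S)` equals `λ_max(S)`, which is bounded above by the
maximum over `i` of the explicit eigenvalue expression. -/
theorem stmt9 (ζ m n : ℕ) [NeZero m] [NeZero n] (hζ : 0 < ζ) (hn : n = ζ * m)
    (hmn : m < n)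
    (σb νb Lb hb σo νo Lo ho : ℝ)
    (hσb : 0 < σb) (hνb : 0 < νb) (hLb : 0 < Lb) (hhb : 0 < hb)
    (hσo : 0 < σo) (hνo : 0 < νo) (hLo : 0 < Lo) (hho : ho = ζ * hb)
    (Mb Mo : ℕ) (hMb : 0 < Mb) (hMo : 0 < Mo)
    (B U : Matrix (ZMod n) (ZMod n) ℝ) (R : Matrix (ZMod m) (ZMod m) ℝ)
    (hB : B = diffCov n σb νb Lb hb Mb) (hR : R = diffCov m σo νo Lo ho Mo)
    (hUsymm : U.IsSymm) (hUpd : U.PosDef) (hUU : U * U = B)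
    (H : Matrix (ZMod m) (ZMod n) ℝ) (hH : H = selectionOp ζ m n)
    (S : Matrix (ZMod n) (ZMod n) ℝ)
    (hS : S = 1 + U.transpose * H.transpose * R⁻¹ * H * U) :
    sInf (spectrum ℝ S) = 1 ∧
    condNum S = sSup (spectrum ℝ S) ∧
    sSup (spectrum ℝ S) ≤
      Finset.univ.sup' ⟨(0 : ZMod m), Finset.mem_univ 0⟩ (fun i : ZMod m =>
        1 + (σb ^ 2 * νb * Lb / (σo ^ 2 * νo * Lo)) *
          ∑ r ∈ Finset.range ζ,
            (1 + 4 * (Lo / ho) ^ 2 * Real.sin (Real.pi * (i.val : ℝ) / m) ^ 2) ^ Mo /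
              (1 + 4 * (Lb / hb) ^ 2 *
                Real.sin (Real.pi * ((i.val : ℝ) + r * m) / (ζ * m)) ^ 2) ^ Mb) := by
  classical
  have hz0 : (ζ : ℝ) ≠ 0 := by exact_mod_cast hζ.ne'
  have hho' : 0 < ho := by rw [hho]; positivity
  set α := σb ^ 2 * νb * Lb / (σo ^ 2 * νo * Lo) with hα
  have hαpos : 0 < α := by positivity
  set lam : ZMod m → ℝ := fun i => α * ∑ r ∈ Finset.range ζ,
            (1 + 4 * (Lo / ho) ^ 2 * Real.sin (Real.pi * (i.val : ℝ) / m) ^ 2) ^ Mo /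
              (1 + 4 * (Lb / hb) ^ 2 *
                Real.sin (Real.pi * ((i.val : ℝ) + r * m) / (ζ * m)) ^ 2) ^ Mb with hlam
  have hlampos : ∀ i, 0 ≤ lam i := fun i => by
    simp only [hlam]; positivity
  set K : Matrix (ZMod m) (ZMod m) ℝ := H * B * Hᵀ * R⁻¹ with hK
  have hKf : ∀ i : ZMod m, cplx K *ᵥ ff m i.val = (lam i : ℂ) • ff m i.val := by
    intro i
    have hc : σo ^ 2 * νo * Lo / ho ≠ 0 := by positivity
    rw [hK, cplx_mul, cplx_mul, cplx_mul, ← Matrix.mulVec_mulVec, ← Matrix.mulVec_mulVec,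
      ← Matrix.mulVec_mulVec, hR, covinv_ff _ _ _ _ _ _ _ hc, Matrix.mulVec_smul, hH,
      selT_ff ζ m n hζ hn, hB]
    simp only [Matrix.mulVec_smul, Matrix.mulVec_sum, cov_ff, sel_ff ζ m n hζ hn]
    rw [← Finset.sum_smul, smul_smul, smul_smul]
    congr 1
    have : lam i = ((σo ^ 2 * νo * Lo / ho)⁻¹ * dsym m Lo ho i.val ^ Mo) * ((ζ : ℝ)⁻¹ *
        ∑ r ∈ Finset.range ζ, (σb ^ 2 * νb * Lb / hb / dsym n Lb hb (i.val + r * m) ^ Mb)) := by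
      simp only [hlam, Finset.mul_sum]
      refine Finset.sum_congr rfl fun r _ => ?_
      have e1 : (1 + 4 * (Lb / hb) ^ 2 *
                Real.sin (Real.pi * ((i.val : ℝ) + r * m) / (ζ * m)) ^ 2)
          = dsym n Lb hb (i.val + r * m) := by
        rw [dsym, hn]; push_cast; rfl
      have e2 : (1 + 4 * (Lo / ho) ^ 2 * Real.sin (Real.pi * (i.val : ℝ) / m) ^ 2)
          = dsym m Lo ho i.val := rfl
      rw [e1, e2]
      have := (dsym_pos n Lb hb (i.val + r * m)).ne'
      generalize dsym n Lb hb (i.val + r * m) = X at *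
      generalize dsym m Lo ho i.val = Y at *
      rw [hα, hho]
      field_simp
    rw [this]
    push_cast
    ring
  have hmem : ∀ t : ℝ, t ∈ spectrum ℝ S ↔ ∃ v, v ≠ 0 ∧ S *ᵥ v = t • v := by
    intro t
    rw [spectrum.mem_iff, Matrix.isUnit_iff_isUnit_det, isUnit_iff_ne_zero, not_not,
      ← Matrix.exists_mulVec_eq_zero_iff]
    refine exists_congr fun v => and_congr_right fun _ => ?_
    rw [Matrix.sub_mulVec, sub_eq_zero, Algebra.algebraMap_eq_smul_one, Matrix.smul_mulVec,
      Matrix.one_mulVec, eq_comm]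
  have hSv : ∀ v, S *ᵥ v = v + (Uᵀ * Hᵀ * R⁻¹) *ᵥ ((H * U) *ᵥ v) := by
    intro v
    rw [hS, Matrix.add_mulVec, Matrix.one_mulVec, Matrix.mulVec_mulVec]
    simp only [Matrix.mul_assoc]
  have h1mem : (1 : ℝ) ∈ spectrum ℝ S := by
    rw [hmem]
    have hnotinj : ¬ Function.Injective (H * U).mulVecLin := by
      intro hinj
      have := LinearMap.finrank_le_finrank_of_injective hinj
      simp only [Module.finrank_fintype_fun_eq_card, ZMod.card] at this
      omega
    rw [← LinearMap.ker_eq_bot, Submodule.eq_bot_iff] at hnotinj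
    push Not at hnotinj
    obtain ⟨v, hv, hv0⟩ := hnotinj
    refine ⟨v, hv0, ?_⟩
    have : (H * U) *ᵥ v = 0 := by simpa using hv
    rw [hSv, this, Matrix.mulVec_zero, add_zero, one_smul]
  have hcases : ∀ t ∈ spectrum ℝ S, t = 1 ∨ ∃ i, t = 1 + lam i := by
    intro t ht
    obtain ⟨v, hv, hvt⟩ := (hmem t).mp ht
    by_cases ht1 : t = 1
    · exact Or.inl ht1
    right
    have ht' : t - 1 ≠ 0 := sub_ne_zero.mpr ht1
    rw [hSv] at hvt
    have hvt' : (Uᵀ * Hᵀ * R⁻¹) *ᵥ ((H * U) *ᵥ v) = (t - 1) • v := by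
      rw [sub_smul, one_smul, ← hvt]; simp
    have hw : (H * U) *ᵥ v ≠ 0 := by
      intro h0
      rw [h0, Matrix.mulVec_zero] at hvt'
      exact (smul_ne_zero ht' hv) hvt'.symm
    have hKe : K = (H * U) * (Uᵀ * Hᵀ * R⁻¹) := by
      rw [hK, ← hUU, hUsymm.eq]; simp only [Matrix.mul_assoc]
    obtain ⟨i, hi⟩ := fourier_eig K lam hKf _ hw (t - 1) (by
      rw [hKe, ← Matrix.mulVec_mulVec, hvt', Matrix.mulVec_smul])
    exact ⟨i, by linarith⟩
  have hge : ∀ t ∈ spectrum ℝ S, 1 ≤ t := by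
    intro t ht
    rcases hcases t ht with h | ⟨i, h⟩
    · exact h.ge
    · have := hlampos i; linarith
  have hinf : sInf (spectrum ℝ S) = 1 :=
    (show IsLeast (spectrum ℝ S) 1 from ⟨h1mem, hge⟩).csInf_eq
  refine ⟨hinf, by rw [condNum, hinf, div_one], ?_⟩
  apply csSup_le ⟨1, h1mem⟩
  intro t ht
  have hle : ∀ i : ZMod m, 1 + lam i ≤ Finset.univ.sup' ⟨(0 : ZMod m), Finset.mem_univ 0⟩
      (fun i => 1 + lam i) := fun i => Finset.le_sup' (fun i => 1 + lam i) (Finset.mem_univ i)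
  rcases hcases t ht with h | ⟨i, h⟩
  · rw [h]
    have := hlampos 0
    exact le_trans (by linarith) (hle 0)
  · rw [h]; exact hle i
end
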